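/- With the mixture posterior density p as above and K ≥ 2, fix j with y_j among the data, set μ₁ = y_j, fix μ₂,…,μ_K ∈ ℝ distinct from y_j as desired, fix λ₂,…,λ_K > 0, fix weights q₁,…,q_K > 0 summing to 1 with 0 < q₁ < 1, and set β = λ₁^{−1}. Then, as λ₁ → ∞, log p(θ) − (N_j/2 + (1−K)α − g) log λ₁ converges to a finite limit; in particular log p(θ) → +∞ whenever N_j/2 + (1−K)α − g > 0. -/

import Mathlib

/-!
Along the path `λ_c = t`, `β = t⁻¹`, every factor of the posterior is positive, so `log p` is a sum
of logarithms. The prior powers contribute `((1 - K) α - g) log t` plus a constant, and the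
exponential prior factor contributes a constant minus `t⁻¹ (h + t + ∑_{k ≠ c} λ_k)`, which
converges. The likelihood factor of a data point `x` is
`q_c t^{1/2} exp(-(t/2) (x - μ_c)²) + C`, where `C > 0` collects the other components and does not
depend on `t`. If `x = μ_c` its logarithm is `(1/2) log t + log q_c + o(1)`; otherwise the Gaussian
factor kills the first term and the logarithm tends to `log C`. Summing over the data points gives
`(N / 2) log t`, with `N` the number of data points equal to `μ_c`.
-/

open MeasureTheory Finset Filter

/-- The (unnormalized) posterior density of the hierarchical Gaussian mixture model:
`p(θ) = β^{Kα+g−1} (∏_k λ_k)^{α−1}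
  exp{−(κ/2)∑_k(μ_k−m)² − β(h+∑_k λ_k)} ∏_i (∑_k q_k λ_k^{1/2} exp{−(λ_k/2)(y_i−μ_k)²})`. -/
noncomputable def mixturePosterior (K n : ℕ) (y : Fin n → ℝ) (α g hc κ m : ℝ)
    (μ lam q : Fin K → ℝ) (β : ℝ) : ℝ :=
  β ^ ((K : ℝ) * α + g - 1) * (∏ k, lam k) ^ (α - 1) *
    Real.exp (-(κ / 2) * ∑ k, (μ k - m) ^ 2 - β * (hc + ∑ k, lam k)) *
    ∏ i, ∑ k, q k * lam k ^ ((1 : ℝ) / 2) * Real.exp (-(lam k / 2) * (y i - μ k) ^ 2)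

section Update

variable {ι M : Type*} [DecidableEq ι] {c : ι}

lemma update_pos_of_forall_ne [Zero M] [LT M] {f : ι → M} {v : M} (hf : ∀ k, k ≠ c → 0 < f k)
    (hv : 0 < v) (k : ι) : 0 < Function.update f c v k :=
  (Function.forall_update_iff f fun _ w => 0 < w).mpr ⟨hv, hf⟩ k

lemma sum_apply_update {N : Type*} [AddCommMonoid N] {s : Finset ι} (hc : c ∈ s)
    (F : ι → M → N) (f : ι → M) (v : M) :
    ∑ k ∈ s, F k (Function.update f c v k) = F c v + ∑ k ∈ s.erase c, F k (f k) := by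
  rw [← Finset.add_sum_erase s _ hc, Function.update_self]
  congr 1
  refine Finset.sum_congr rfl fun k hk => ?_
  rw [Function.update_of_ne (Finset.ne_of_mem_erase hk)]

end Update

section LogLimits

lemma tendsto_log_mul_rpow_add_sub_mul_log {a r : ℝ} (C : ℝ) (ha : a ≠ 0) (hr : 0 < r) :
    Tendsto (fun t : ℝ => Real.log (a * t ^ r + C) - r * Real.log t) atTop
      (nhds (Real.log a)) := by
  have hlim : Tendsto (fun t : ℝ => a + C * t ^ (-r)) atTop (nhds a) := by
    simpa using ((tendsto_rpow_neg_atTop hr).const_mul C).const_add a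
  refine (hlim.log ha).congr' ?_
  filter_upwards [eventually_gt_atTop 0, hlim.eventually_ne ha] with t ht hne
  have hpow : 0 < t ^ r := Real.rpow_pos_of_pos ht r
  have hfactor : a * t ^ r + C = (a + C * t ^ (-r)) * t ^ r := by
    rw [Real.rpow_neg ht.le]
    field_simp
  rw [hfactor, Real.log_mul hne hpow.ne', Real.log_rpow ht, add_sub_cancel_right]

lemma tendsto_log_mul_rpow_mul_exp_neg_mul_add (a r : ℝ) {b C : ℝ} (hb : 0 < b) (hC : C ≠ 0) :
    Tendsto (fun t : ℝ => Real.log (a * (t ^ r * Real.exp (-b * t)) + C)) atTop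
      (nhds (Real.log C)) := by
  have hlim : Tendsto (fun t : ℝ => a * (t ^ r * Real.exp (-b * t)) + C) atTop (nhds C) := by
    simpa using ((tendsto_rpow_mul_exp_neg_mul_atTop_nhds_zero r b hb).const_mul a).add_const C
  exact hlim.log hC

end LogLimits

section GaussianMixture

variable {ι : Type*}

/-- The density at `x` of the Gaussian mixture with weights `q`, precisions `lam` and means `μ`,
up to the factor `(2π)^{-1/2}`. Only the components in `s` are kept, so that one component can be
separated from the others. -/
noncomputable def gaussianMixture (s : Finset ι) (q lam μ : ι → ℝ) (x : ℝ) : ℝ :=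
  ∑ k ∈ s, q k * lam k ^ ((1 : ℝ) / 2) * Real.exp (-(lam k / 2) * (x - μ k) ^ 2)

lemma gaussianMixture_pos {s : Finset ι} {q lam : ι → ℝ} (hlam : ∀ k ∈ s, 0 < lam k)
    (hq : ∀ k ∈ s, 0 ≤ q k) (hq_pos : ∃ k ∈ s, 0 < q k) (μ : ι → ℝ) (x : ℝ) :
    0 < gaussianMixture s q lam μ x := by
  have hpow : ∀ k ∈ s, 0 < lam k ^ ((1 : ℝ) / 2) := fun k hk =>
    Real.rpow_pos_of_pos (hlam k hk) _
  obtain ⟨k, hk, hqk⟩ := hq_pos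
  refine Finset.sum_pos' (fun l hl => ?_) ⟨k, hk, ?_⟩
  · exact mul_nonneg (mul_nonneg (hq l hl) (hpow l hl).le) (Real.exp_pos _).le
  · exact mul_pos (mul_pos hqk (hpow k hk)) (Real.exp_pos _)

variable [DecidableEq ι] {s : Finset ι} {c : ι}

lemma gaussianMixture_update (hc : c ∈ s) (q lam μ : ι → ℝ) (t x : ℝ) :
    gaussianMixture s q (Function.update lam c t) μ x =
      q c * t ^ ((1 : ℝ) / 2) * Real.exp (-(t / 2) * (x - μ c) ^ 2) +
        gaussianMixture (s.erase c) q lam μ x :=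
  sum_apply_update hc
    (fun k v => q k * v ^ ((1 : ℝ) / 2) * Real.exp (-(v / 2) * (x - μ k) ^ 2)) lam t

lemma tendsto_log_gaussianMixture_update_of_eq {q μ : ι → ℝ} {x : ℝ} (hc : c ∈ s)
    (lam : ι → ℝ) (hqc : q c ≠ 0) (hx : x = μ c) :
    Tendsto (fun t : ℝ =>
        Real.log (gaussianMixture s q (Function.update lam c t) μ x) - 1 / 2 * Real.log t)
      atTop (nhds (Real.log (q c))) := by
  refine (tendsto_log_mul_rpow_add_sub_mul_log (gaussianMixture (s.erase c) q lam μ x) hqc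
    one_half_pos).congr fun t => ?_
  simp [gaussianMixture_update hc, hx]

lemma tendsto_log_gaussianMixture_update_of_ne {q lam μ : ι → ℝ} {x : ℝ} (hc : c ∈ s)
    (hrest : gaussianMixture (s.erase c) q lam μ x ≠ 0) (hx : x ≠ μ c) :
    Tendsto (fun t : ℝ => Real.log (gaussianMixture s q (Function.update lam c t) μ x))
      atTop (nhds (Real.log (gaussianMixture (s.erase c) q lam μ x))) := by
  have hrate : 0 < (x - μ c) ^ 2 / 2 := half_pos (sq_pos_of_ne_zero (sub_ne_zero.mpr hx))
  refine (tendsto_log_mul_rpow_mul_exp_neg_mul_add (q c) (1 / 2) hrate hrest).congr fun t => ?_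
  have hexponent : -((x - μ c) ^ 2 / 2) * t = -(t / 2) * (x - μ c) ^ 2 := by ring
  rw [gaussianMixture_update hc, hexponent, mul_assoc]

lemma tendsto_sum_log_gaussianMixture_update {η : Type*} [Fintype η] (y : η → ℝ)
    {q lam μ : ι → ℝ} (hc : c ∈ s) (hqc : q c ≠ 0)
    (hrest : ∀ i, gaussianMixture (s.erase c) q lam μ (y i) ≠ 0) :
    Tendsto (fun t : ℝ =>
        ∑ i, Real.log (gaussianMixture s q (Function.update lam c t) μ (y i)) -
          (Nat.card {i // y i = μ c} : ℝ) / 2 * Real.log t)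
      atTop (nhds (∑ i, if y i = μ c then Real.log (q c)
        else Real.log (gaussianMixture (s.erase c) q lam μ (y i)))) := by
  have hfactor : ∀ i, Tendsto (fun t : ℝ =>
      Real.log (gaussianMixture s q (Function.update lam c t) μ (y i)) -
        (if y i = μ c then 1 / 2 else 0) * Real.log t)
      atTop (nhds (if y i = μ c then Real.log (q c)
        else Real.log (gaussianMixture (s.erase c) q lam μ (y i)))) := by
    intro i
    split_ifs with hi
    · exact tendsto_log_gaussianMixture_update_of_eq hc lam hqc hi
    · simpa only [zero_mul, sub_zero] using
        tendsto_log_gaussianMixture_update_of_ne hc (hrest i) hi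
  have hcount : ∑ i, (if y i = μ c then (1 : ℝ) / 2 else 0) =
      (Nat.card {i // y i = μ c} : ℝ) / 2 := by
    rw [← Finset.sum_filter, Finset.sum_const, nsmul_eq_mul, Nat.card_eq_fintype_card,
      Fintype.card_subtype, mul_one_div]
  refine (tendsto_finsetSum univ fun i _ => hfactor i).congr fun t => ?_
  rw [Finset.sum_sub_distrib, ← Finset.sum_mul, hcount]

end GaussianMixture

section MixturePrior

variable {ι : Type*} [Fintype ι]

/-- The unnormalized prior density of the hierarchical mixture model in the component means `μ`,
the precisions `lam` and their common rate `β`, i.e. the part of the posterior which does not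
involve the data. -/
noncomputable def mixturePrior (α g h κ m : ℝ) (μ lam : ι → ℝ) (β : ℝ) : ℝ :=
  β ^ ((Fintype.card ι : ℝ) * α + g - 1) * (∏ k, lam k) ^ (α - 1) *
    Real.exp (-(κ / 2) * ∑ k, (μ k - m) ^ 2 - β * (h + ∑ k, lam k))

variable {β : ℝ} {lam : ι → ℝ}

lemma mixturePrior_pos (α g h κ m : ℝ) (μ : ι → ℝ) (hβ : 0 < β) (hlam : ∀ k, 0 < lam k) :
    0 < mixturePrior α g h κ m μ lam β := by
  have hprod : 0 < ∏ k, lam k := Finset.prod_pos fun k _ => hlam k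
  unfold mixturePrior
  positivity

lemma log_mixturePrior (α g h κ m : ℝ) (μ : ι → ℝ) (hβ : 0 < β) (hlam : ∀ k, 0 < lam k) :
    Real.log (mixturePrior α g h κ m μ lam β) =
      ((Fintype.card ι : ℝ) * α + g - 1) * Real.log β + (α - 1) * ∑ k, Real.log (lam k) +
        (-(κ / 2) * ∑ k, (μ k - m) ^ 2 - β * (h + ∑ k, lam k)) := by
  have hprod : 0 < ∏ k, lam k := Finset.prod_pos fun k _ => hlam k
  rw [mixturePrior, Real.log_mul (by positivity) (Real.exp_pos _).ne',
    Real.log_mul (by positivity) (by positivity), Real.log_exp, Real.log_rpow hβ,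
    Real.log_rpow hprod, Real.log_prod fun k _ => (hlam k).ne']

variable [DecidableEq ι] {c : ι}

lemma tendsto_log_mixturePrior_update (α g h κ m : ℝ) (μ : ι → ℝ)
    (hlam : ∀ k, k ≠ c → 0 < lam k) :
    Tendsto (fun t : ℝ =>
        Real.log (mixturePrior α g h κ m μ (Function.update lam c t) t⁻¹) -
          ((1 - (Fintype.card ι : ℝ)) * α - g) * Real.log t)
      atTop (nhds ((α - 1) * ∑ k ∈ univ.erase c, Real.log (lam k) +
        (-(κ / 2) * ∑ k, (μ k - m) ^ 2 - 1))) := by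
  have hrate : Tendsto (fun t : ℝ => t⁻¹ * (h + ∑ k ∈ univ.erase c, lam k) + 1) atTop (nhds 1) := by
    simpa using (tendsto_inv_atTop_zero.mul_const (h + ∑ k ∈ univ.erase c, lam k)).add_const 1
  refine ((hrate.const_sub _).const_add _).congr' ?_
  filter_upwards [eventually_gt_atTop 0] with t ht
  rw [log_mixturePrior α g h κ m μ (inv_pos.mpr ht) (update_pos_of_forall_ne hlam ht),
    sum_apply_update (mem_univ c) fun _ => Real.log,
    sum_apply_update (mem_univ c) fun _ v => v, Real.log_inv]
  linear_combination inv_mul_cancel₀ ht.ne'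

end MixturePrior

lemma mixturePosterior_eq_mixturePrior_mul_prod (K n : ℕ) (y : Fin n → ℝ) (α g h κ m : ℝ)
    (μ lam q : Fin K → ℝ) (β : ℝ) :
    mixturePosterior K n y α g h κ m μ lam q β =
      mixturePrior α g h κ m μ lam β * ∏ i, gaussianMixture univ q lam μ (y i) := by
  rw [mixturePosterior, mixturePrior, Fintype.card_fin]
  rfl

lemma log_mixturePosterior {K n : ℕ} (y : Fin n → ℝ) (α g h κ m : ℝ) (μ : Fin K → ℝ)
    {lam q : Fin K → ℝ} {β : ℝ} (hβ : 0 < β) (hlam : ∀ k, 0 < lam k) (hq : ∀ k, 0 ≤ q k)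
    (hq_pos : ∃ k, 0 < q k) :
    Real.log (mixturePosterior K n y α g h κ m μ lam q β) =
      Real.log (mixturePrior α g h κ m μ lam β) +
        ∑ i, Real.log (gaussianMixture univ q lam μ (y i)) := by
  have hmixture : ∀ i, gaussianMixture univ q lam μ (y i) ≠ 0 := fun i =>
    (gaussianMixture_pos (fun k _ => hlam k) (fun k _ => hq k) (by simpa using hq_pos) μ (y i)).ne'
  rw [mixturePosterior_eq_mixturePrior_mul_prod,
    Real.log_mul (mixturePrior_pos α g h κ m μ hβ hlam).ne'
      (Finset.prod_ne_zero_iff.mpr fun i _ => hmixture i),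
    Real.log_prod fun i _ => hmixture i]

theorem mixturePosterior_log_asymptotics_general {K n : ℕ} (y : Fin n → ℝ) (α g h κ m : ℝ)
    {c : Fin K} (μ : Fin K → ℝ) {lam q : Fin K → ℝ} (hlam : ∀ k, k ≠ c → 0 < lam k)
    (hq : ∀ k, 0 ≤ q k) (hqc : 0 < q c) (hq_rest : ∃ k, k ≠ c ∧ 0 < q k) :
    (∃ ℓ : ℝ, Tendsto
        (fun t : ℝ =>
          Real.log (mixturePosterior K n y α g h κ m μ (Function.update lam c t) q t⁻¹) -
            ((Nat.card {i : Fin n // y i = μ c} : ℝ) / 2 + (1 - (K : ℝ)) * α - g) *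
              Real.log t)
        atTop (nhds ℓ)) ∧
    ((Nat.card {i : Fin n // y i = μ c} : ℝ) / 2 + (1 - (K : ℝ)) * α - g > 0 →
      Tendsto
        (fun t : ℝ =>
          Real.log (mixturePosterior K n y α g h κ m μ (Function.update lam c t) q t⁻¹))
        atTop atTop) := by
  have hrest : ∀ i, gaussianMixture (univ.erase c) q lam μ (y i) ≠ 0 := fun i =>
    (gaussianMixture_pos (fun k hk => hlam k (Finset.ne_of_mem_erase hk)) (fun k _ => hq k)
      (by simpa using hq_rest) μ (y i)).ne'
  have hprior := tendsto_log_mixturePrior_update α g h κ m μ hlam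
  have hlikelihood := tendsto_sum_log_gaussianMixture_update y (mem_univ c) hqc.ne' hrest
  have hlim := (hprior.add hlikelihood).congr' (f₂ := fun t : ℝ =>
      Real.log (mixturePosterior K n y α g h κ m μ (Function.update lam c t) q t⁻¹) -
        ((Nat.card {i : Fin n // y i = μ c} : ℝ) / 2 + (1 - (K : ℝ)) * α - g) * Real.log t) <| by
    filter_upwards [eventually_gt_atTop 0] with t ht
    rw [log_mixturePosterior y α g h κ m μ (inv_pos.mpr ht) (update_pos_of_forall_ne hlam ht) hq
      ⟨c, hqc⟩, Fintype.card_fin]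
    ring
  refine ⟨⟨_, hlim⟩, fun hpos => ?_⟩
  refine (hlim.add_atTop (Real.tendsto_log_atTop.const_mul_atTop hpos)).congr fun t => ?_
  exact sub_add_cancel _ _

/-- fix `μ₁ = y_j`, `μ₂,…,μ_K ≠ y_j`, `λ₂,…,λ_K > 0`, positive weights summing
to one with `q₁ < 1`, and set `β = λ₁⁻¹`. Then as `λ₁ → ∞`,
`log p(θ) − (N_j/2 + (1−K)α − g) log λ₁` converges to a finite limit; in particular
`log p(θ) → +∞` whenever `N_j/2 + (1−K)α − g > 0`. -/
theorem mixturePosterior_log_asymptotics (K n : ℕ) [NeZero K] (hK : 2 ≤ K) (y : Fin n → ℝ)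
    (α g hc κ : ℝ) (m : ℝ)
    (hα : 0 < α) (hg : 0 < g) (hhc : 0 < hc) (hκ : 0 < κ)
    (j : Fin n) (μ lam q : Fin K → ℝ)
    (hμ0 : μ 0 = y j) (hμk : ∀ k : Fin K, k ≠ 0 → μ k ≠ y j)
    (hlam : ∀ k : Fin K, k ≠ 0 → 0 < lam k)
    (hq : ∀ k, 0 < q k) (hqsum : (∑ k, q k) = 1) (hq0 : q 0 < 1) :
    (∃ ℓ : ℝ, Tendsto
        (fun t : ℝ =>
          Real.log (mixturePosterior K n y α g hc κ m μ (Function.update lam 0 t) q t⁻¹) -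
            ((Nat.card {i : Fin n // y i = y j} : ℝ) / 2 + (1 - (K : ℝ)) * α - g) *
              Real.log t)
        atTop (nhds ℓ)) ∧
    ((Nat.card {i : Fin n // y i = y j} : ℝ) / 2 + (1 - (K : ℝ)) * α - g > 0 →
      Tendsto
        (fun t : ℝ =>
          Real.log (mixturePosterior K n y α g hc κ m μ (Function.update lam 0 t) q t⁻¹))
        atTop atTop) := by
  have : Nontrivial (Fin K) := Fin.nontrivial_iff_two_le.mpr hK
  obtain ⟨k, hk⟩ := exists_ne (0 : Fin K)
  simpa only [hμ0] using mixturePosterior_log_asymptotics_general y α g hc κ m μ hlam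
    (fun k => (hq k).le) (hq 0) ⟨k, hk, hq k⟩
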